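/- Let q ∈ [1,2), η : [0,T] → ℝ continuous of finite q-variation, and g : ℝ → ℝ Lipschitz and bounded. Then the Young ODE y_t = ξ + ∫_t^T g(y_s) dη_s has a unique continuous solution y of finite q-variation on [0,T], for any ξ ∈ ℝ. -/

import Mathlib

open Finset Set

/-- The set of partition sums `(∑ |X_{t_{i+1}} - X_{t_i}|^p)^(1/p)` over partitions of `[s, T]`. -/
def pVarSet (p s T : ℝ) (X : ℝ → ℝ) : Set ℝ :=
  { v | ∃ (n : ℕ) (t : ℕ → ℝ), Monotone t ∧ t 0 = s ∧ (∀ i ≥ n, t i = T) ∧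
      v = (∑ i ∈ Finset.range n, |X (t (i + 1)) - X (t i)| ^ p) ^ (1 / p) }

/-- The `p`-variation of `X` on `[s, T]`. -/
noncomputable def pVar (p s T : ℝ) (X : ℝ → ℝ) : ℝ := sSup (pVarSet p s T X)

/-- `X` has finite `p`-variation on `[s, T]`. -/
def HasFinitePVar (p s T : ℝ) (X : ℝ → ℝ) : Prop := BddAbove (pVarSet p s T X)

/-- Supremum norm of `X` on `[s, T]`. -/
noncomputable def supNorm (s T : ℝ) (X : ℝ → ℝ) : ℝ :=
  sSup ((fun t => |X t|) '' Set.Icc s T)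

/-- `I` is the Young integral `∫_s^T X dY`: the limit of left-point Riemann–Stieltjes sums
over partitions of `[s, T]` as the mesh tends to `0`. -/
def IsYoungIntegral (s T : ℝ) (X Y : ℝ → ℝ) (I : ℝ) : Prop :=
  ∀ ε > 0, ∃ δ > 0, ∀ (n : ℕ) (t : ℕ → ℝ), Monotone t → t 0 = s → (∀ i ≥ n, t i = T) →
    (∀ i < n, t (i + 1) - t i < δ) →
    |(∑ i ∈ Finset.range n, X (t i) * (Y (t (i + 1)) - Y (t i))) - I| < ε

open Filter Topology

/-!
Doss–Sussmann representation. A continuous driver `η` of finite `q`-variation with `q < 2` has zero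
quadratic variation, so the Young integral obeys the ordinary chain rule. If `φ` is the flow of
`x' = g x`, then `y t = φ (η b - η t) ξ` has increments `y c - y d = g (y c) (η d - η c)` up to a
multiple of `(η d - η c) ^ 2`, hence solves the equation.

Conversely, the defects `g (y c) (η d - η c) - (y c - y d)` of any solution `y` have vanishing sums
over every `[t, b]`, so by a Saks–Henstock argument the sums of their absolute values vanish too.
Since the flow is Lipschitz in space, the sums of the absolute increments of
`s ↦ φ (η s - η b) (y s)` then also vanish. This path is therefore constant, equal to `ξ`, and
inverting the flow recovers `y`.
-/

/-! ### Sums over interval partitions -/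

/-- Partitions of `[a, b]` into finitely many consecutive closed intervals, listed from left to
right. Intervals may be degenerate, so this matches the monotone, eventually constant sequences of
`pVarSet` and `IsYoungIntegral`, while allowing concatenation and structural induction. -/
inductive IntervalPartition : ℝ → ℝ → Type
  | nil (a : ℝ) : IntervalPartition a a
  | cons (a c : ℝ) {b : ℝ} (hac : a ≤ c) (p : IntervalPartition c b) : IntervalPartition a b

namespace IntervalPartition

variable {a b c : ℝ} {w w' : ℝ → ℝ → ℝ}

/-- The largest length of an interval of the partition, and `0` if there is no interval. -/
def mesh {a b : ℝ} : IntervalPartition a b → ℝ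
  | nil _ => 0
  | cons a c _ p => max (c - a) p.mesh

/-- The sum of an interval function `w`, evaluated as `w c d` on `[c, d]`, over the intervals of
a partition. -/
def sum (w : ℝ → ℝ → ℝ) {a b : ℝ} : IntervalPartition a b → ℝ
  | nil _ => 0
  | cons a c _ p => w a c + p.sum w

/-- Concatenation of partitions of adjacent intervals. -/
def append {a b c : ℝ} : IntervalPartition a b → IntervalPartition b c → IntervalPartition a c
  | nil _, r => r
  | cons a d had p, r => cons a d had (p.append r)

theorem le (p : IntervalPartition a b) : a ≤ b := by
  induction p with
  | nil => exact le_rfl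
  | cons _ _ hac _ ih => exact hac.trans ih

theorem mesh_nonneg (p : IntervalPartition a b) : 0 ≤ p.mesh := by
  induction p with
  | nil => exact le_rfl
  | cons _ _ _ _ ih => exact le_max_of_le_right ih

theorem mesh_append (p : IntervalPartition a b) (r : IntervalPartition b c) :
    (p.append r).mesh = max p.mesh r.mesh := by
  induction p with
  | nil => exact (max_eq_right r.mesh_nonneg).symm
  | cons _ _ _ _ ih => simp only [append, mesh, ih, max_assoc]

theorem sum_append (p : IntervalPartition a b) (r : IntervalPartition b c) :
    (p.append r).sum w = p.sum w + r.sum w := by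
  induction p with
  | nil => simp only [append, sum, zero_add]
  | cons _ _ _ _ ih => simp only [append, sum, ih, add_assoc]

theorem sum_le_sum (p : IntervalPartition a b)
    (h : ∀ c d, a ≤ c → c ≤ d → d ≤ b → d - c ≤ p.mesh → w c d ≤ w' c d) :
    p.sum w ≤ p.sum w' := by
  induction p with
  | nil => exact le_rfl
  | cons a c hac p ih =>
    exact add_le_add (h a c le_rfl hac p.le (le_max_left _ _)) <| ih fun d e hcd hde heb hm =>
      h d e (hac.trans hcd) hde heb (hm.trans (le_max_right _ _))

theorem sum_nonneg (hw : ∀ c d, 0 ≤ w c d) (p : IntervalPartition a b) : 0 ≤ p.sum w := by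
  induction p with
  | nil => exact le_rfl
  | cons a c _ _ ih => exact add_nonneg (hw a c) ih

theorem sum_add (p : IntervalPartition a b) :
    p.sum (fun c d => w c d + w' c d) = p.sum w + p.sum w' := by
  induction p with
  | nil => simp only [sum, add_zero]
  | cons _ _ _ _ ih => simp only [sum, ih, add_add_add_comm]

theorem sum_const_mul (k : ℝ) (p : IntervalPartition a b) :
    p.sum (fun c d => k * w c d) = k * p.sum w := by
  induction p with
  | nil => simp only [sum, mul_zero]
  | cons _ _ _ _ ih => simp only [sum, ih, mul_add]

theorem sum_sub (p : IntervalPartition a b) :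
    p.sum (fun c d => w c d - w' c d) = p.sum w - p.sum w' := by
  induction p with
  | nil => simp only [sum, sub_zero]
  | cons _ _ _ _ ih => simp only [sum, ih, add_sub_add_comm]

theorem sum_increments (f : ℝ → ℝ) (p : IntervalPartition a b) :
    p.sum (fun c d => f c - f d) = f a - f b := by
  induction p with
  | nil => simp only [sum, sub_self]
  | cons _ _ _ _ ih => simp only [sum, ih, sub_add_sub_cancel]

theorem abs_sum_le (p : IntervalPartition a b) : |p.sum w| ≤ p.sum fun c d => |w c d| := by
  induction p with
  | nil => simp only [sum, abs_zero, le_refl]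
  | cons _ _ _ _ ih => exact (abs_add_le _ _).trans (add_le_add_right ih _)

theorem exists_seq (p : IntervalPartition a b) : ∃ (n : ℕ) (t : ℕ → ℝ), Monotone t ∧ t 0 = a ∧
    (∀ i ≥ n, t i = b) ∧ (∀ i < n, t (i + 1) - t i ≤ p.mesh) ∧
      ∀ w : ℝ → ℝ → ℝ, p.sum w = ∑ i ∈ Finset.range n, w (t i) (t (i + 1)) := by
  induction p with
  | nil a =>
    exact ⟨0, fun _ => a, monotone_const, rfl, fun _ _ => rfl, by simp, fun _ => by simp [sum]⟩
  | cons a c hac p ih =>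
    obtain ⟨n, t, ht, rfl, hn, hmesh, hsum⟩ := ih
    refine ⟨n + 1, fun i => Nat.casesOn i a t, monotone_nat_of_le_succ ?_, rfl, ?_, ?_, ?_⟩
    · rintro (_ | i)
      exacts [hac, ht i.le_succ]
    · rintro (_ | i) hi
      exacts [absurd hi (by lia), hn i (by lia)]
    · rintro (_ | i) hi
      exacts [le_max_left _ _, le_max_of_le_right (hmesh i (by lia))]
    · intro w
      rw [Finset.sum_range_succ', sum, hsum, add_comm]
      rfl

theorem exists_of_seq {n : ℕ} {t : ℕ → ℝ} (ht : Monotone t) (h0 : t 0 = a)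
    (hn : ∀ i ≥ n, t i = b) :
    ∃ p : IntervalPartition a b,
      (∀ δ > 0, (∀ i < n, t (i + 1) - t i < δ) → p.mesh < δ) ∧
        ∀ w : ℝ → ℝ → ℝ, p.sum w = ∑ i ∈ Finset.range n, w (t i) (t (i + 1)) := by
  subst h0
  induction n generalizing t with
  | zero =>
    obtain rfl := hn 0 le_rfl
    exact ⟨nil _, fun δ hδ _ => hδ, fun _ => by simp [sum]⟩
  | succ n ih =>
    obtain ⟨p, hmesh, hsum⟩ := ih (t := fun i => t (i + 1)) (fun i j h => ht (by lia))
      (fun i hi => hn (i + 1) (by lia))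
    refine ⟨cons (t 0) (t 1) (ht (by lia)) p, fun δ hδ hstep => ?_, fun w => ?_⟩
    · exact max_lt (hstep 0 (by lia)) (hmesh δ hδ fun i hi => hstep (i + 1) (by lia))
    · rw [Finset.sum_range_succ', sum, hsum, add_comm]

theorem exists_mesh_lt {δ : ℝ} (hδ : 0 < δ) (hab : a ≤ b) :
    ∃ p : IntervalPartition a b, p.mesh < δ := by
  obtain ⟨n, hn⟩ := exists_nat_ge ((b - a) / (δ / 2))
  rw [div_le_iff₀ (half_pos hδ)] at hn
  have ht : Monotone fun i : ℕ => min (a + i * (δ / 2)) b := fun i j hij => by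
    dsimp only
    gcongr
  have hend : ∀ i ≥ n, min (a + i * (δ / 2)) b = b := fun i hi => min_eq_right <| by
    have : (n : ℝ) * (δ / 2) ≤ i * (δ / 2) := by gcongr
    linarith
  obtain ⟨p, hmesh, -⟩ := exists_of_seq (a := a) ht (by simpa using hab) hend
  refine ⟨p, hmesh δ hδ fun i _ => ?_⟩
  have : min (a + (i + 1) * (δ / 2)) b ≤ min (a + i * (δ / 2)) b + δ / 2 := by
    rw [← min_add_add_right]
    exact min_le_min (by linarith) (by linarith)
  push_cast
  linarith

/-- The filter of partitions of `[a, b]` whose mesh tends to `0`. -/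
def fine (a b : ℝ) : Filter (IntervalPartition a b) := comap mesh (𝓝 0)

theorem hasBasis_fine (a b : ℝ) :
    (fine a b).HasBasis (0 < ·) fun δ => {p | p.mesh < δ} := by
  refine (Metric.nhds_basis_ball.comap mesh).to_hasBasis' (fun δ hδ => ⟨δ, hδ, fun p hp => ?_⟩)
    fun δ hδ => ?_
  · simpa [abs_of_nonneg p.mesh_nonneg] using hp
  · exact preimage_mem_comap (Iio_mem_nhds hδ)

theorem eventually_mesh_lt {δ : ℝ} (hδ : 0 < δ) : ∀ᶠ p in fine a b, p.mesh < δ :=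
  (hasBasis_fine a b).mem_of_mem hδ

theorem fine_neBot (hab : a ≤ b) : (fine a b).NeBot :=
  (hasBasis_fine a b).neBot_iff.mpr fun hδ => exists_mesh_lt hδ hab

theorem tendsto_append (a b c : ℝ) :
    Tendsto (fun pr : IntervalPartition a b × IntervalPartition b c => pr.1.append pr.2)
      (fine a b ×ˢ fine b c) (fine a c) := by
  refine tendsto_comap_iff.mpr ?_
  have hab : Tendsto mesh (fine a b) (𝓝 0) := tendsto_comap
  have hbc : Tendsto mesh (fine b c) (𝓝 0) := tendsto_comap
  simpa only [Function.comp_def, mesh_append, max_self] using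
    (hab.comp tendsto_fst).max (hbc.comp tendsto_snd)

theorem tendsto_sum_left {I J : ℝ} (hbc : b ≤ c)
    (hI : Tendsto (fun p => p.sum w) (fine a c) (𝓝 I))
    (hJ : Tendsto (fun p => p.sum w) (fine b c) (𝓝 J)) :
    Tendsto (fun p => p.sum w) (fine a b) (𝓝 (I - J)) := by
  have := fine_neBot hbc
  have h := (hI.comp (tendsto_append a b c)).sub (hJ.comp tendsto_snd)
  simp only [Function.comp_def, sum_append, add_sub_cancel_right] at h
  rw [← map_fst_prod (fine a b) (fine b c)]
  exact h

theorem tendsto_sum_right_zero (hw : ∀ c d, 0 ≤ w c d) (hab : a ≤ b)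
    (h : Tendsto (fun p => p.sum w) (fine a c) (𝓝 0)) :
    Tendsto (fun p => p.sum w) (fine b c) (𝓝 0) := by
  have := fine_neBot hab
  rw [← map_snd_prod (fine a b) (fine b c), tendsto_map'_iff]
  refine squeeze_zero (fun pr => pr.2.sum_nonneg hw) (fun pr => ?_)
    (h.comp (tendsto_append a b c))
  simpa [sum_append] using pr.1.sum_nonneg hw

theorem exists_forall_lt_of_tendsto_sum (hw : ∀ c d, 0 ≤ w c d)
    (h : Tendsto (fun p => p.sum w) (fine a b) (𝓝 0)) {ε : ℝ} (hε : 0 < ε) :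
    ∃ δ > 0, ∀ c d, a ≤ c → c ≤ d → d ≤ b → d - c < δ → w c d < ε := by
  obtain ⟨δ, hδ, hsum⟩ := (hasBasis_fine a b).eventually_iff.mp (h.eventually_lt_const hε)
  refine ⟨δ, hδ, fun c d hac hcd hdb hlt => ?_⟩
  obtain ⟨p, hp⟩ := exists_mesh_lt hδ hac
  obtain ⟨r, hr⟩ := exists_mesh_lt hδ hdb
  have hmesh : (p.append (cons c d hcd r)).mesh < δ := by
    rw [mesh_append]
    exact max_lt hp (max_lt hlt hr)
  have := hsum hmesh
  rw [sum_append, sum] at this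
  linarith [p.sum_nonneg hw, r.sum_nonneg hw]

theorem eq_of_tendsto_sum (hab : a ≤ b) {f : ℝ → ℝ}
    (hf : ∀ c d, a ≤ c → c ≤ d → d ≤ b → |f c - f d| ≤ w c d)
    (hw : Tendsto (fun p => p.sum w) (fine a b) (𝓝 0)) : f a = f b := by
  have := fine_neBot hab
  refine sub_eq_zero.mp (abs_nonpos_iff.mp (ge_of_tendsto' hw fun p => ?_))
  calc |f a - f b| = |p.sum fun c d => f c - f d| := by rw [sum_increments]
    _ ≤ p.sum fun c d => |f c - f d| := p.abs_sum_le
    _ ≤ p.sum w := p.sum_le_sum fun c d hac hcd hdb _ => hf c d hac hcd hdb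

-- Intervals on which `w` is negative can be partitioned so finely that they contribute nothing.
theorem sum_posPart_mem_closure {δ : ℝ} (hδ : 0 < δ)
    (hw : ∀ c d, a ≤ c → c ≤ d → d ≤ b → Tendsto (fun p => p.sum w) (fine c d) (𝓝 0))
    (p : IntervalPartition a b) (hp : p.mesh < δ) :
    p.sum (fun c d => max (w c d) 0) ∈
      closure ((fun r : IntervalPartition a b => r.sum w) '' {r | r.mesh < δ}) := by
  induction p with
  | nil a => exact subset_closure ⟨nil a, hδ, rfl⟩
  | cons a c hac p ih =>
    obtain ⟨hc, hmesh⟩ := max_lt_iff.mp hp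
    have ih := ih (fun d e hcd => hw d e (hac.trans hcd)) hmesh
    rcases le_total 0 (w a c) with hpos | hneg
    · rw [sum, max_eq_left hpos]
      refine map_mem_closure (continuous_const_add _) ih ?_
      rintro _ ⟨r, hr, rfl⟩
      exact ⟨cons a c hac r, max_lt hc hr, rfl⟩
    · have := fine_neBot hac
      have hzero : 0 ∈ closure ((fun r : IntervalPartition a c => r.sum w) '' {r | r.mesh < δ}) :=
        mem_closure_of_tendsto (hw a c le_rfl hac p.le)
          ((eventually_mesh_lt hδ).mono fun r hr => mem_image_of_mem _ hr)
      rw [sum, max_eq_right hneg]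
      refine map_mem_closure₂ continuous_add hzero ih ?_
      rintro _ ⟨r, hr, rfl⟩ _ ⟨r', hr', rfl⟩
      exact ⟨r.append r', by simpa [mesh_append] using ⟨hr, hr'⟩, sum_append r r'⟩

/-- A form of the Saks–Henstock lemma. -/
theorem tendsto_sum_abs (hab : a ≤ b)
    (hw : ∀ s, a ≤ s → s ≤ b → Tendsto (fun p => p.sum w) (fine s b) (𝓝 0)) :
    Tendsto (fun p => p.sum fun c d => |w c d|) (fine a b) (𝓝 0) := by
  have hsub : ∀ c d, a ≤ c → c ≤ d → d ≤ b → Tendsto (fun p => p.sum w) (fine c d) (𝓝 0) :=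
    fun c d hac hcd hdb => by
      simpa using tendsto_sum_left hdb (hw c hac (hcd.trans hdb)) (hw d (hac.trans hcd) hdb)
  have hpos : Tendsto (fun p => p.sum fun c d => max (w c d) 0) (fine a b) (𝓝 0) := by
    refine Metric.nhds_basis_closedBall.tendsto_right_iff.mpr fun ε hε => ?_
    obtain ⟨δ, hδ, hsum⟩ := ((hasBasis_fine a b).tendsto_iff Metric.nhds_basis_closedBall).mp
      (hw a le_rfl hab) ε hε
    refine (eventually_mesh_lt hδ).mono fun p hp => ?_
    exact Metric.isClosed_closedBall.closure_subset_iff.mpr (image_subset_iff.mpr hsum)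
      (sum_posPart_mem_closure hδ hsub p hp)
  have habs : (fun c d => |w c d|) = fun c d => 2 * max (w c d) 0 - w c d := by
    ext c d
    linarith [max_zero_add_max_neg_zero_eq_abs_self (w c d), max_zero_sub_eq_self (w c d)]
  simpa only [habs, sum_sub, sum_const_mul, mul_zero, sub_zero] using
    (hpos.const_mul 2).sub (hw a le_rfl hab)

end IntervalPartition

/-! ### Flows of Lipschitz vector fields -/

section Flow

open Real (exp)
open scoped BoundedContinuousFunction

variable {E : Type*} [NormedAddCommGroup E] [NormedSpace ℝ E] {g : E → E} {L : NNReal}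

theorem norm_integral_le_of_norm_le_exp {f : ℝ → E} {C κ : ℝ} (hκ : 0 < κ)
    (hf : ∀ s, ‖f s‖ ≤ C * exp (κ * |s|)) (t : ℝ) :
    ‖∫ s in (0 : ℝ)..t, f s‖ ≤ C / κ * exp (κ * |t|) := by
  have hC : 0 ≤ C := by simpa using (norm_nonneg _).trans (hf 0)
  wlog ht : 0 ≤ t generalizing f t
  · have := this (f := fun s => f (-s)) (fun s => by simpa using hf (-s)) (-t) (by linarith)
    rw [intervalIntegral.integral_comp_neg, neg_neg, neg_zero, abs_neg] at this
    rwa [intervalIntegral.integral_symm, norm_neg]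
  have hexp : Continuous fun s => C * exp (κ * s) := by fun_prop
  calc ‖∫ s in (0 : ℝ)..t, f s‖ ≤ ∫ s in (0 : ℝ)..t, C * exp (κ * s) :=
        intervalIntegral.norm_integral_le_of_norm_le ht
          (.of_forall fun s hs => by simpa [abs_of_pos hs.1] using hf s)
          (hexp.intervalIntegrable 0 t)
    _ = C / κ * (exp (κ * t) - 1) := by
        rw [intervalIntegral.integral_const_mul, intervalIntegral.integral_comp_mul_left _ hκ.ne',
          integral_exp, mul_zero, Real.exp_zero, smul_eq_mul, div_eq_mul_inv, mul_assoc]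
    _ ≤ C / κ * exp (κ * |t|) := by
        rw [abs_of_nonneg ht]
        gcongr
        linarith

/-- The Picard map `α ↦ x + ∫ g ∘ α` of the equation `α' = g α`, conjugated by the Bielecki weight
`t ↦ exp (κ |t|)`; for `κ > L` it contracts the bounded continuous functions on all of `ℝ`. -/
noncomputable def weightedPicard (g : E → E) (κ : ℝ) (x : E) (β : ℝ → E) (t : ℝ) : E :=
  exp (-(κ * |t|)) • (x + ∫ s in (0 : ℝ)..t, g (exp (κ * |s|) • β s))

theorem continuous_weightedPicard (hg : Continuous g) (κ : ℝ) (x : E)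
    {β : ℝ → E} (hβ : Continuous β) : Continuous (weightedPicard g κ x β) := by
  have hcont : Continuous fun s => g (exp (κ * |s|) • β s) := by fun_prop
  exact .smul (by fun_prop) <| continuous_const.add <|
    intervalIntegral.continuous_primitive (fun a b => hcont.intervalIntegrable a b) 0

theorem norm_weightedPicard_sub_le (hg : LipschitzWith L g) {κ : ℝ} (hκ : 0 < κ) (x : E)
    (β γ : ℝ →ᵇ E) (t : ℝ) :
    ‖weightedPicard g κ x β t - weightedPicard g κ x γ t‖ ≤ L / κ * dist β γ := by
  have hintegrable : ∀ β : ℝ →ᵇ E, IntervalIntegrable (fun s => g (exp (κ * |s|) • β s))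
      MeasureTheory.volume 0 t := fun β =>
    (hg.continuous.comp (by fun_prop)).intervalIntegrable 0 t
  have hbound : ∀ s, ‖g (exp (κ * |s|) • β s) - g (exp (κ * |s|) • γ s)‖ ≤
      L * dist β γ * exp (κ * |s|) := fun s =>
    calc _ ≤ L * ‖exp (κ * |s|) • β s - exp (κ * |s|) • γ s‖ := hg.norm_sub_le _ _
      _ = L * ‖β s - γ s‖ * exp (κ * |s|) := by
          rw [← smul_sub, norm_smul, Real.norm_of_nonneg (Real.exp_nonneg _)]
          ring
      _ ≤ L * dist β γ * exp (κ * |s|) := by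
          rw [← dist_eq_norm]
          gcongr
          exact β.dist_coe_le_dist s
  calc _ = exp (-(κ * |t|)) *
        ‖∫ s in (0 : ℝ)..t, g (exp (κ * |s|) • β s) - g (exp (κ * |s|) • γ s)‖ := by
        rw [weightedPicard, weightedPicard, ← smul_sub, add_sub_add_left_eq_sub,
          ← intervalIntegral.integral_sub (hintegrable β) (hintegrable γ), norm_smul,
          Real.norm_of_nonneg (Real.exp_nonneg _)]
    _ ≤ exp (-(κ * |t|)) * (L * dist β γ / κ * exp (κ * |t|)) := by
        gcongr
        exact norm_integral_le_of_norm_le_exp hκ hbound t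
    _ = L / κ * dist β γ := by
        rw [Real.exp_neg]
        field_simp

theorem norm_weightedPicard_zero_le (g : E → E) {κ : ℝ} (hκ : 0 < κ) (x : E) (t : ℝ) :
    ‖weightedPicard g κ x 0 t‖ ≤ ‖x‖ + ‖g 0‖ / κ := by
  have hexp : 1 ≤ exp (κ * |t|) := Real.one_le_exp (by positivity)
  have hbound := norm_integral_le_of_norm_le_exp (f := fun _ => g 0) hκ
    (fun s => le_mul_of_one_le_right (norm_nonneg _) (Real.one_le_exp (by positivity))) t
  calc _ = exp (-(κ * |t|)) * ‖x + ∫ _ in (0 : ℝ)..t, g 0‖ := by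
        simp only [weightedPicard, Pi.zero_apply, smul_zero, norm_smul,
          Real.norm_of_nonneg (Real.exp_nonneg _)]
    _ ≤ exp (-(κ * |t|)) * (‖x‖ * exp (κ * |t|) + ‖g 0‖ / κ * exp (κ * |t|)) := by
        gcongr
        exact (norm_add_le _ _).trans
          (add_le_add (le_mul_of_one_le_right (norm_nonneg x) hexp) hbound)
    _ = ‖x‖ + ‖g 0‖ / κ := by
        rw [Real.exp_neg]
        field_simp

theorem exists_isIntegralCurve_of_lipschitzWith [CompleteSpace E] (hg : LipschitzWith L g)
    (x : E) : ∃ α : ℝ → E, α 0 = x ∧ IsIntegralCurve α fun _ => g := by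
  have hκ : (0 : ℝ) < L + 1 := by positivity
  let P : (ℝ →ᵇ E) → (ℝ →ᵇ E) := fun β =>
    .ofNormedAddCommGroup (weightedPicard g (L + 1) x β)
      (continuous_weightedPicard hg.continuous _ x β.continuous)
      (‖x‖ + ‖g 0‖ / (L + 1) + L / (L + 1) * dist β 0) fun t =>
        (norm_le_norm_add_norm_sub' _ _).trans (add_le_add
          (norm_weightedPicard_zero_le g hκ x t) (norm_weightedPicard_sub_le hg hκ x β 0 t))
  have hP : ContractingWith (L / (L + 1)) P := by
    refine ⟨by rw [div_lt_one (by positivity)]; exact lt_add_one L, .of_dist_le_mul fun β γ => ?_⟩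
    refine (BoundedContinuousFunction.dist_le (by positivity)).mpr fun t => ?_
    rw [dist_eq_norm]
    exact norm_weightedPicard_sub_le hg hκ x β γ t
  obtain ⟨β, hβ⟩ : ∃ β, P β = β := ⟨_, hP.fixedPoint_isFixedPt⟩
  have hα : ∀ t, exp ((L + 1) * |t|) • β t =
      x + ∫ s in (0 : ℝ)..t, g (exp ((L + 1) * |s|) • β s) := fun t => by
    conv_lhs => rw [← hβ]
    exact (smul_smul _ _ _).trans (by rw [← Real.exp_add, add_neg_cancel, Real.exp_zero, one_smul])
  refine ⟨fun t => exp ((L + 1) * |t|) • β t, by simpa using hα 0, fun t => ?_⟩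
  have hcont : Continuous fun s => g (exp ((L + 1) * |s|) • β s) :=
    hg.continuous.comp (by fun_prop)
  exact ((hcont.integral_hasStrictDerivAt 0 t).hasDerivAt.const_add x).congr_of_eventuallyEq
    (.of_forall hα)

/-- `φ` is a flow of the vector field `g`: `φ u x` is the value at time `u` of a global solution of
`α' = g α` starting from `x`. The group law is a consequence when `g` is Lipschitz. -/
structure IsFlow (g : E → E) (φ : ℝ → E → E) : Prop where
  zero (x : E) : φ 0 x = x
  isIntegralCurve (x : E) : IsIntegralCurve (φ · x) fun _ => g

theorem exists_isFlow [CompleteSpace E] (hg : LipschitzWith L g) : ∃ φ, IsFlow g φ := by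
  choose α hzero hα using exists_isIntegralCurve_of_lipschitzWith hg
  exact ⟨fun u x => α x u, hzero, hα⟩

namespace IsFlow

variable {φ : ℝ → E → E}

theorem add (hφ : IsFlow g φ) (hg : LipschitzWith L g) (u v : ℝ) (x : E) :
    φ (u + v) x = φ u (φ v x) :=
  congr_fun (ODE_solution_unique_univ (t₀ := 0) (s := fun _ => univ) (fun _ => hg.lipschitzOnWith)
    (fun t => ⟨(hφ.isIntegralCurve x).comp_add v t, mem_univ _⟩)
    (fun t => ⟨hφ.isIntegralCurve (φ v x) t, mem_univ _⟩)
    (by simp [hφ.zero])) u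

theorem neg (hφ : IsFlow g φ) : IsFlow (fun x => -g x) fun u => φ (-u) where
  zero x := by rw [neg_zero, hφ.zero]
  isIntegralCurve x t := by
    simpa [Function.comp_def] using (hφ.isIntegralCurve x (-t)).scomp t (hasDerivAt_neg t)

theorem norm_sub_le (hφ : IsFlow g φ) (hg : LipschitzWith L g) (u : ℝ) (x y : E) :
    ‖φ u x - φ u y‖ ≤ ‖x - y‖ * exp (L * |u|) := by
  wlog hu : 0 ≤ u generalizing u g φ
  · simpa using this hφ.neg hg.neg (-u) (by linarith)
  have := dist_le_of_trajectories_ODE (v := fun _ => g) (fun _ => hg)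
    (hφ.isIntegralCurve x).continuous.continuousOn
    (fun t _ => (hφ.isIntegralCurve x t).hasDerivWithinAt)
    (hφ.isIntegralCurve y).continuous.continuousOn
    (fun t _ => (hφ.isIntegralCurve y t).hasDerivWithinAt) le_rfl u ⟨hu, le_rfl⟩
  simpa [dist_eq_norm, hφ.zero, abs_of_nonneg hu] using this

-- `g (φ u x)` is the derivative at `v = 0` of `φ v (φ u x) = φ u (φ v x)`.
theorem norm_apply_le (hφ : IsFlow g φ) (hg : LipschitzWith L g) (u : ℝ) (x : E) :
    ‖g (φ u x)‖ ≤ ‖g x‖ * exp (L * |u|) := by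
  have hslope : ∀ x, Tendsto (fun v => ‖v⁻¹ • (φ v x - x)‖) (𝓝[≠] 0) (𝓝 ‖g x‖) := fun x => by
    simpa [hφ.zero] using (hφ.isIntegralCurve x 0).tendsto_slope_zero.norm
  refine le_of_tendsto_of_tendsto' (hslope (φ u x)) ((hslope x).mul_const _) fun v => ?_
  rw [← hφ.add hg, add_comm, hφ.add hg, norm_smul, norm_smul, mul_assoc]
  gcongr
  exact hφ.norm_sub_le hg u _ x

theorem norm_sub_self_le (hφ : IsFlow g φ) (hg : LipschitzWith L g) (u : ℝ) (x : E) :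
    ‖φ u x - x‖ ≤ ‖g x‖ * exp (L * |u|) * |u| := by
  have := (convex_Icc (-|u|) |u|).norm_image_sub_le_of_norm_hasDerivWithin_le (f := (φ · x))
    (C := ‖g x‖ * exp (L * |u|))
    (fun v _ => (hφ.isIntegralCurve x v).hasDerivWithinAt)
    (fun v hv => (hφ.norm_apply_le hg v x).trans (by have := abs_le.mpr hv; gcongr))
    (x := 0) (y := u) (by simp) ⟨neg_abs_le u, le_abs_self u⟩
  simpa [hφ.zero] using this

theorem norm_sub_sub_smul_le (hφ : IsFlow g φ) (hg : LipschitzWith L g) (u : ℝ) (x : E) :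
    ‖φ u x - x - u • g x‖ ≤ L * (‖g x‖ * exp (L * |u|)) * u ^ 2 := by
  have hderiv : ∀ v ∈ Icc (-|u|) |u|,
      ‖g (φ v x) - g x‖ ≤ L * (‖g x‖ * exp (L * |u|) * |u|) := fun v hv => by
    refine (hg.norm_sub_le _ _).trans ?_
    have := abs_le.mpr hv
    gcongr
    exact (hφ.norm_sub_self_le hg v x).trans (by gcongr)
  have := (convex_Icc (-|u|) |u|).norm_image_sub_le_of_norm_hasDerivWithin_le
    (f := fun v => φ v x - v • g x)
    (fun v _ => ((hφ.isIntegralCurve x v).sub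
      (by simpa using (hasDerivAt_id v).smul_const (g x))).hasDerivWithinAt) hderiv
    (x := 0) (y := u) (by simp) ⟨neg_abs_le u, le_abs_self u⟩
  calc ‖φ u x - x - u • g x‖ = ‖φ u x - u • g x - (φ 0 x - (0 : ℝ) • g x)‖ := by
        rw [hφ.zero, zero_smul, sub_zero, sub_right_comm]
    _ ≤ L * (‖g x‖ * exp (L * |u|) * |u|) * ‖u - 0‖ := this
    _ = L * (‖g x‖ * exp (L * |u|)) * u ^ 2 := by
        rw [sub_zero, Real.norm_eq_abs, ← sq_abs u]
        ring

end IsFlow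

end Flow

/-! ### Young equations -/

open IntervalPartition

section Young

variable {a b c q ξ : ℝ} {X Y Z η y g : ℝ → ℝ} {L : NNReal}

theorem isYoungIntegral_iff_tendsto {I : ℝ} :
    IsYoungIntegral a b X Y I ↔
      Tendsto (fun p => p.sum fun c d => X c * (Y d - Y c)) (fine a b) (𝓝 I) := by
  rw [(hasBasis_fine a b).tendsto_iff Metric.nhds_basis_ball]
  refine ⟨fun h ε hε => ?_, fun h ε hε => ?_⟩ <;> obtain ⟨δ, hδ, h⟩ := h ε hε
  · refine ⟨δ, hδ, fun p hp => ?_⟩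
    obtain ⟨n, t, ht, h0, hn, hmesh, hsum⟩ := p.exists_seq
    rw [Metric.mem_ball, Real.dist_eq, hsum]
    exact h n t ht h0 hn fun i hi => (hmesh i hi).trans_lt hp
  · refine ⟨δ, hδ, fun n t ht h0 hn hmesh => ?_⟩
    obtain ⟨p, hp, hsum⟩ := exists_of_seq ht h0 hn
    simpa only [Metric.mem_ball, Real.dist_eq, hsum] using h p (hp δ hδ hmesh)

theorem IsYoungIntegral.eq_zero_of_self {I : ℝ} (h : IsYoungIntegral a a X Y I) : I = 0 := by
  refine abs_nonpos_iff.mp (le_of_forall_pos_lt_add fun ε hε => ?_)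
  obtain ⟨δ, -, h⟩ := h ε hε
  simpa using h 0 (fun _ => a) monotone_const rfl (fun _ _ => rfl) (by simp)

theorem hasFinitePVar_iff (hq : 0 < q) :
    HasFinitePVar q a b X ↔
      ∃ V, ∀ p : IntervalPartition a b, p.sum (fun c d => |X d - X c| ^ q) ≤ V := by
  refine ⟨fun ⟨V, hV⟩ => ⟨V ^ q, fun p => ?_⟩, fun ⟨V, hV⟩ => ⟨V ^ (1 / q), ?_⟩⟩
  · obtain ⟨n, t, ht, h0, hn, -, hsum⟩ := p.exists_seq
    have hnonneg := p.sum_nonneg (w := fun c d => |X d - X c| ^ q) fun c d => by positivity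
    have hle : p.sum (fun c d => |X d - X c| ^ q) ^ (1 / q) ≤ V :=
      hV ⟨n, t, ht, h0, hn, by rw [hsum]⟩
    rw [one_div] at hle
    exact (Real.rpow_inv_le_iff_of_pos hnonneg ((Real.rpow_nonneg hnonneg _).trans hle) hq).mp hle
  · rintro _ ⟨n, t, ht, h0, hn, rfl⟩
    obtain ⟨p, -, hsum⟩ := exists_of_seq ht h0 hn
    rw [← hsum fun c d => |X d - X c| ^ q]
    gcongr
    · exact p.sum_nonneg fun c d => by positivity
    · exact hV p

theorem HasFinitePVar.of_abs_sub_le {K : ℝ} (hq : 0 < q) (hK : 0 ≤ K) (hX : HasFinitePVar q a b X)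
    (h : ∀ c ∈ Icc a b, ∀ d ∈ Icc a b, |Y d - Y c| ≤ K * |X d - X c|) :
    HasFinitePVar q a b Y := by
  obtain ⟨V, hV⟩ := (hasFinitePVar_iff hq).mp hX
  refine (hasFinitePVar_iff hq).mpr ⟨K ^ q * V, fun p => ?_⟩
  calc p.sum (fun c d => |Y d - Y c| ^ q) ≤ p.sum fun c d => K ^ q * |X d - X c| ^ q :=
        p.sum_le_sum fun c d hac hcd hdb _ => by
          rw [← Real.mul_rpow hK (abs_nonneg _)]
          gcongr
          exact h c ⟨hac, hcd.trans hdb⟩ d ⟨hac.trans hcd, hdb⟩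
    _ ≤ K ^ q * V := by
        rw [sum_const_mul]
        gcongr
        exact hV p

/-- `η` has zero quadratic variation on `[a, b]`, in the sense that the sums of its squared
increments vanish as the mesh tends to `0`. -/
def HasZeroQuadVar (a b : ℝ) (η : ℝ → ℝ) : Prop :=
  Tendsto (fun p => p.sum fun c d => (η d - η c) ^ 2) (fine a b) (𝓝 0)

theorem HasZeroQuadVar.mono_left (h : HasZeroQuadVar a b η) (hac : a ≤ c) :
    HasZeroQuadVar c b η :=
  tendsto_sum_right_zero (fun _ _ => sq_nonneg _) hac h

theorem HasFinitePVar.hasZeroQuadVar (hq : 0 < q) (hq2 : q < 2) (hη : ContinuousOn η (Icc a b))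
    (h : HasFinitePVar q a b η) : HasZeroQuadVar a b η := by
  obtain ⟨V, hV⟩ := (hasFinitePVar_iff hq).mp h
  have hpow : Tendsto (fun r : ℝ => r ^ (2 - q) * V) (𝓝[>] 0) (𝓝 0) := by
    have := (Real.continuousAt_rpow_const 0 (2 - q) (.inr (by linarith))).tendsto.mul_const V
    rw [Real.zero_rpow (by linarith), zero_mul] at this
    exact this.mono_left nhdsWithin_le_nhds
  refine Metric.nhds_basis_closedBall.tendsto_right_iff.mpr fun ε hε => ?_
  obtain ⟨r, hrε, hr : 0 < r⟩ := ((hpow.eventually_le_const hε).and self_mem_nhdsWithin).exists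
  obtain ⟨δ, hδ, hunif⟩ := Metric.uniformContinuousOn_iff.mp
    (isCompact_Icc.uniformContinuousOn_of_continuous hη) r hr
  refine (eventually_mesh_lt hδ).mono fun p hp => ?_
  have hsq : ∀ c d, a ≤ c → c ≤ d → d ≤ b → d - c ≤ p.mesh →
      (η d - η c) ^ 2 ≤ r ^ (2 - q) * |η d - η c| ^ q := fun c d hac hcd hdb hm => by
    have hinc : |η d - η c| < r := hunif d ⟨hac.trans hcd, hdb⟩ c ⟨hac, hcd.trans hdb⟩
      (by rw [Real.dist_eq, abs_of_nonneg (sub_nonneg.mpr hcd)]; linarith)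
    calc (η d - η c) ^ 2 = |η d - η c| ^ (2 - q) * |η d - η c| ^ q := by
          rw [← Real.rpow_add_of_nonneg (abs_nonneg _) (by linarith) hq.le, sub_add_cancel,
            Real.rpow_two, sq_abs]
      _ ≤ r ^ (2 - q) * |η d - η c| ^ q := by
          gcongr
  rw [mem_closedBall_zero_iff, Real.norm_of_nonneg (p.sum_nonneg fun _ _ => sq_nonneg _)]
  calc p.sum (fun c d => (η d - η c) ^ 2) ≤ r ^ (2 - q) * p.sum fun c d => |η d - η c| ^ q :=
        (p.sum_le_sum hsq).trans_eq (p.sum_const_mul _)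
    _ ≤ r ^ (2 - q) * V := by
        gcongr
        exact hV p
    _ ≤ ε := hrε

theorem HasZeroQuadVar.isYoungIntegral_of_abs_sub_le {C : ℝ} (hY : HasZeroQuadVar a b Y)
    (h : ∀ c ∈ Icc a b, ∀ d ∈ Icc a b,
      |X c * (Y d - Y c) - (Z c - Z d)| ≤ C * (Y d - Y c) ^ 2) :
    IsYoungIntegral a b X Y (Z a - Z b) := by
  have hdefect : Tendsto (fun p => p.sum fun c d => X c * (Y d - Y c) - (Z c - Z d))
      (fine a b) (𝓝 0) := by
    refine squeeze_zero_norm (fun p => ?_) (by simpa using hY.const_mul C)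
    rw [← sum_const_mul]
    exact p.abs_sum_le.trans <| p.sum_le_sum fun c d hac hcd hdb _ =>
      h c ⟨hac, hcd.trans hdb⟩ d ⟨hac.trans hcd, hdb⟩
  simpa [isYoungIntegral_iff_tendsto, sum_sub, ↓sum_increments] using
    hdefect.add_const (Z a - Z b)

-- When `t < s`, the multiple of `|y t - y s|` hidden in `g (y t)` is absorbed by the left side.
theorem abs_sub_le_two_mul_defect_add (hg : LipschitzWith L g) (η y : ℝ → ℝ) {s t : ℝ}
    (h : L * |η t - η s| < 1 / 2) :
    |y t - y s| ≤ 2 * (|g (y (min s t)) * (η (max s t) - η (min s t)) -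
      (y (min s t) - y (max s t))| + |g (y s)| * |η t - η s|) := by
  have htri : ∀ c d, |y c - y d| ≤
      |g (y c) * (η d - η c) - (y c - y d)| + |g (y c)| * |η d - η c| := fun c d => by
    rw [← abs_mul, abs_sub_comm (g (y c) * _)]
    linarith [abs_sub_abs_le_abs_sub (y c - y d) (g (y c) * (η d - η c))]
  have hlip : |g (y t)| ≤ |g (y s)| + L * |y t - y s| := by
    have := hg.norm_sub_le (y t) (y s)
    simp only [Real.norm_eq_abs] at this
    linarith [abs_sub_abs_le_abs_sub (g (y t)) (g (y s))]
  have hself : |y t - y s| ≤ |g (y (min s t)) * (η (max s t) - η (min s t)) -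
      (y (min s t) - y (max s t))| + (|g (y s)| + L * |y t - y s|) * |η t - η s| := by
    rcases le_total s t with hst | hts
    · rw [min_eq_left hst, max_eq_right hst, abs_sub_comm (y t)]
      refine (htri s t).trans ?_
      gcongr
      exact le_add_of_nonneg_right (by positivity)
    · rw [min_eq_right hts, max_eq_left hts, abs_sub_comm (η t)]
      refine (htri t s).trans ?_
      gcongr
  linarith [mul_le_mul_of_nonneg_right h.le (abs_nonneg (y t - y s))]

/-- `y` solves the backward Young equation `y t = ξ + ∫_t^b g (y s) dη s` on `[a, b]`. Neither
continuity nor finite variation of `y` is part of the definition. -/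
def SolvesYoungODE (a b : ℝ) (g η : ℝ → ℝ) (ξ : ℝ) (y : ℝ → ℝ) : Prop :=
  ∀ t ∈ Icc a b, IsYoungIntegral t b (fun s => g (y s)) η (y t - ξ)

namespace SolvesYoungODE

theorem mono_left (h : SolvesYoungODE a b g η ξ y) (hac : a ≤ c) : SolvesYoungODE c b g η ξ y :=
  fun t ht => h t ⟨hac.trans ht.1, ht.2⟩

theorem apply_right (h : SolvesYoungODE a b g η ξ y) (hab : a ≤ b) : y b = ξ :=
  sub_eq_zero.mp (h b ⟨hab, le_rfl⟩).eq_zero_of_self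

theorem tendsto_sum_abs_defect (h : SolvesYoungODE a b g η ξ y) (hab : a ≤ b) :
    Tendsto (fun p => p.sum fun c d => |g (y c) * (η d - η c) - (y c - y d)|) (fine a b)
      (𝓝 0) := by
  refine tendsto_sum_abs hab fun s has hsb => ?_
  simpa [sum_sub, ↓sum_increments, h.apply_right hab] using
    (isYoungIntegral_iff_tendsto.mp (h s ⟨has, hsb⟩)).sub_const (y s - y b)

theorem tendsto_abs_defect (h : SolvesYoungODE a b g η ξ y) {s : ℝ} (hs : s ∈ Icc a b) :
    Tendsto (fun t => |g (y (min s t)) * (η (max s t) - η (min s t)) -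
      (y (min s t) - y (max s t))|) (𝓝[Icc a b] s) (𝓝 0) := by
  refine Metric.nhds_basis_ball.tendsto_right_iff.mpr fun ε hε => ?_
  obtain ⟨δ, hδ, hlt⟩ := exists_forall_lt_of_tendsto_sum (fun _ _ => abs_nonneg _)
    (h.tendsto_sum_abs_defect (hs.1.trans hs.2)) hε
  filter_upwards [self_mem_nhdsWithin, nhdsWithin_le_nhds (Metric.ball_mem_nhds s hδ)]
    with t ht hst
  rw [mem_ball_zero_iff, Real.norm_eq_abs, abs_abs]
  refine hlt _ _ (le_min hs.1 ht.1) min_le_max (max_le hs.2 ht.2) ?_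
  rwa [max_sub_min_eq_abs, ← Real.dist_eq]

theorem continuousOn (h : SolvesYoungODE a b g η ξ y) (hg : LipschitzWith L g)
    (hη : ContinuousOn η (Icc a b)) : ContinuousOn y (Icc a b) := by
  intro s hs
  let D t := |g (y (min s t)) * (η (max s t) - η (min s t)) - (y (min s t) - y (max s t))|
  have hinc : Tendsto (fun t => |η t - η s|) (𝓝[Icc a b] s) (𝓝 0) :=
    tendsto_iff_dist_tendsto_zero.mp (hη s hs)
  have hlim : Tendsto (fun t => 2 * (D t + |g (y s)| * |η t - η s|)) (𝓝[Icc a b] s) (𝓝 0) := by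
    simpa using ((h.tendsto_abs_defect hs).add (hinc.const_mul |g (y s)|)).const_mul 2
  have hsmall : ∀ᶠ t in 𝓝[Icc a b] s, L * |η t - η s| < 1 / 2 := by
    have := hinc.const_mul (L : ℝ)
    rw [mul_zero] at this
    exact this.eventually_lt_const one_half_pos
  refine tendsto_iff_dist_tendsto_zero.mpr <|
    squeeze_zero' (.of_forall fun _ => dist_nonneg) (hsmall.mono fun t ht => ?_) hlim
  rw [Real.dist_eq]
  exact abs_sub_le_two_mul_defect_add hg η y ht

end SolvesYoungODE

theorem exists_forall_abs_mul_exp_le (hg : Continuous g) (L : NNReal)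
    (hη : ContinuousOn η (Icc a b)) (hy : ContinuousOn y (Icc a b)) :
    ∃ K, 0 ≤ K ∧ ∀ c ∈ Icc a b, ∀ d ∈ Icc a b, |g (y c)| * Real.exp (L * |η c - η d|) ≤ K := by
  obtain ⟨H, hH⟩ := isCompact_Icc.exists_bound_of_continuousOn hη
  obtain ⟨G, hG⟩ := isCompact_Icc.exists_bound_of_continuousOn (hg.comp_continuousOn hy)
  refine ⟨|G| * Real.exp (L * (H + H)), by positivity, fun c hc d hd => ?_⟩
  have hinc : |η c - η d| ≤ H + H := (abs_sub _ _).trans (add_le_add (hH c hc) (hH d hd))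
  have hgy : |g (y c)| ≤ |G| := (hG c hc).trans (le_abs_self G)
  exact mul_le_mul hgy (by gcongr) (Real.exp_nonneg _) (abs_nonneg G)

namespace IsFlow

variable {φ : ℝ → ℝ → ℝ}

theorem continuousOn_comp (hφ : IsFlow g φ) (hη : ContinuousOn η (Icc a b)) (k x : ℝ) :
    ContinuousOn (fun t => φ (k - η t) x) (Icc a b) :=
  (hφ.isIntegralCurve x).continuous.comp_continuousOn (continuousOn_const.sub hη)

theorem apply_sub_apply (hφ : IsFlow g φ) (hg : LipschitzWith L g) (u v k x : ℝ) :
    φ (u - v) (φ (k - u) x) = φ (k - v) x := by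
  rw [← hφ.add hg, sub_add_sub_cancel']

theorem exists_abs_sub_sub_mul_le (hφ : IsFlow g φ) (hg : LipschitzWith L g)
    (hη : ContinuousOn η (Icc a b)) (hy : ContinuousOn y (Icc a b)) :
    ∃ C, ∀ c ∈ Icc a b, ∀ d ∈ Icc a b,
      |φ (η c - η d) (y c) - y c - (η c - η d) * g (y c)| ≤ C * (η d - η c) ^ 2 := by
  obtain ⟨K, -, hK⟩ := exists_forall_abs_mul_exp_le hg.continuous L hη hy
  refine ⟨L * K, fun c hc d hd => ?_⟩
  calc |φ (η c - η d) (y c) - y c - (η c - η d) * g (y c)| ≤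
        L * (|g (y c)| * Real.exp (L * |η c - η d|)) * (η c - η d) ^ 2 :=
        hφ.norm_sub_sub_smul_le hg (η c - η d) (y c)
    _ ≤ L * K * (η d - η c) ^ 2 := by
        rw [← neg_sub (η d), neg_sq, neg_sub]
        gcongr
        exact hK c hc d hd

theorem hasFinitePVar_comp (hφ : IsFlow g φ) (hg : LipschitzWith L g) (hq : 0 < q)
    (hη : ContinuousOn η (Icc a b)) (hfη : HasFinitePVar q a b η) (k x : ℝ) :
    HasFinitePVar q a b fun t => φ (k - η t) x := by
  obtain ⟨K, hK0, hK⟩ := exists_forall_abs_mul_exp_le hg.continuous L hη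
    (hφ.continuousOn_comp hη k x)
  refine hfη.of_abs_sub_le hq hK0 fun c hc d hd => ?_
  calc |φ (k - η d) x - φ (k - η c) x| =
        |φ (η c - η d) (φ (k - η c) x) - φ (k - η c) x| := by rw [hφ.apply_sub_apply hg]
    _ ≤ |g (φ (k - η c) x)| * Real.exp (L * |η c - η d|) * |η c - η d| :=
        hφ.norm_sub_self_le hg _ _
    _ ≤ K * |η d - η c| := by
        rw [abs_sub_comm (η d)]
        gcongr
        exact hK c hc d hd

theorem solvesYoungODE (hφ : IsFlow g φ) (hg : LipschitzWith L g) (hη : ContinuousOn η (Icc a b))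
    (hqv : HasZeroQuadVar a b η) (ξ : ℝ) :
    SolvesYoungODE a b g η ξ fun t => φ (η b - η t) ξ := by
  obtain ⟨C, hC⟩ := hφ.exists_abs_sub_sub_mul_le hg hη (hφ.continuousOn_comp hη (η b) ξ)
  intro t ht
  have hdefect : ∀ c ∈ Icc t b, ∀ d ∈ Icc t b,
      |g (φ (η b - η c) ξ) * (η d - η c) - (φ (η b - η c) ξ - φ (η b - η d) ξ)| ≤
        C * (η d - η c) ^ 2 := fun c hc d hd => by
    refine (le_of_eq ?_).trans (hC c ⟨ht.1.trans hc.1, hc.2⟩ d ⟨ht.1.trans hd.1, hd.2⟩)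
    rw [hφ.apply_sub_apply hg]
    ring_nf
  have hyoung := (hqv.mono_left ht.1).isYoungIntegral_of_abs_sub_le hdefect
  rwa [sub_self, hφ.zero] at hyoung

theorem apply_eq_of_solvesYoungODE (hφ : IsFlow g φ) (hg : LipschitzWith L g)
    (hη : ContinuousOn η (Icc a b)) (hqv : HasZeroQuadVar a b η) (h : SolvesYoungODE a b g η ξ y)
    (hab : a ≤ b) : φ (η a - η b) (y a) = ξ := by
  have hy : ContinuousOn y (Icc a b) := h.continuousOn hg hη
  obtain ⟨C, hC⟩ := hφ.exists_abs_sub_sub_mul_le hg hη hy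
  obtain ⟨K, hK⟩ := isCompact_Icc.exists_bound_of_continuousOn
    (f := fun d => Real.exp (L * |η d - η b|)) (by fun_prop)
  have hK0 : 0 ≤ K := (norm_nonneg _).trans (hK b ⟨hab, le_rfl⟩)
  have hlim := ((hqv.const_mul C).add (h.tendsto_sum_abs_defect hab)).const_mul K
  simp only [mul_zero, add_zero, ← sum_const_mul, ← sum_add] at hlim
  have hconst := eq_of_tendsto_sum hab (f := fun s => φ (η s - η b) (y s))
    (fun c d hac hcd hdb => ?_) hlim
  · simpa [hφ.zero, h.apply_right hab] using hconst
  have hc : c ∈ Icc a b := ⟨hac, hcd.trans hdb⟩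
  have hd : d ∈ Icc a b := ⟨hac.trans hcd, hdb⟩
  calc |φ (η c - η b) (y c) - φ (η d - η b) (y d)| =
        |φ (η d - η b) (φ (η c - η d) (y c)) - φ (η d - η b) (y d)| := by
        rw [← hφ.add hg, add_comm, sub_add_sub_cancel]
    _ ≤ |φ (η c - η d) (y c) - y d| * Real.exp (L * |η d - η b|) := hφ.norm_sub_le hg _ _ _
    _ ≤ K * |φ (η c - η d) (y c) - y d| := by
        rw [mul_comm]
        gcongr
        exact (le_abs_self _).trans (hK d hd)
    _ ≤ K * (C * (η d - η c) ^ 2 + |g (y c) * (η d - η c) - (y c - y d)|) := by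
        gcongr
        refine (le_of_eq ?_).trans ((abs_sub _ _).trans (add_le_add_left (hC c hc d hd) _))
        ring_nf

theorem eq_of_solvesYoungODE (hφ : IsFlow g φ) (hg : LipschitzWith L g)
    (hη : ContinuousOn η (Icc a b)) (hqv : HasZeroQuadVar a b η) (h : SolvesYoungODE a b g η ξ y) :
    EqOn y (fun t => φ (η b - η t) ξ) (Icc a b) := by
  intro t ht
  have := hφ.apply_eq_of_solvesYoungODE hg (hη.mono (Icc_subset_Icc_left ht.1))
    (hqv.mono_left ht.1) (h.mono_left ht.1) ht.2
  simp only [← this, ← hφ.add hg, sub_add_sub_cancel, sub_self, hφ.zero]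

end IsFlow

theorem young_ode_wellposed_general (hq : 0 < q) (hq2 : q < 2) (hη : ContinuousOn η (Icc a b))
    (hfη : HasFinitePVar q a b η) (hg : LipschitzWith L g) (ξ : ℝ) :
    ∃ y, (ContinuousOn y (Icc a b) ∧ HasFinitePVar q a b y ∧ SolvesYoungODE a b g η ξ y) ∧
      ∀ y', SolvesYoungODE a b g η ξ y' → EqOn y' y (Icc a b) := by
  obtain ⟨φ, hφ⟩ := exists_isFlow hg
  have hqv : HasZeroQuadVar a b η := hfη.hasZeroQuadVar hq hq2 hη
  exact ⟨fun t => φ (η b - η t) ξ,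
    ⟨hφ.continuousOn_comp hη _ ξ, hφ.hasFinitePVar_comp hg hq hη hfη _ ξ,
      hφ.solvesYoungODE hg hη hqv ξ⟩,
    fun _ h => hφ.eq_of_solvesYoungODE hg hη hqv h⟩

end Young

/-- well-posedness of the backward Young ODE `y_t = ξ + ∫_t^T g(y_s) dη_s`. -/
theorem young_ode_wellposed (T : ℝ) (hT : 0 < T) (q : ℝ) (hq1 : 1 ≤ q) (hq2 : q < 2)
    (η : ℝ → ℝ) (hη : ContinuousOn η (Set.Icc 0 T)) (hfη : HasFinitePVar q 0 T η)
    (g : ℝ → ℝ) (L : NNReal) (hg : LipschitzWith L g) (M : ℝ) (hgb : ∀ x, |g x| ≤ M)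
    (ξ : ℝ) :
    ∃ y : ℝ → ℝ, (ContinuousOn y (Set.Icc 0 T) ∧ HasFinitePVar q 0 T y ∧
        ∀ t ∈ Set.Icc (0 : ℝ) T, IsYoungIntegral t T (fun s => g (y s)) η (y t - ξ)) ∧
      ∀ y' : ℝ → ℝ, (ContinuousOn y' (Set.Icc 0 T) ∧ HasFinitePVar q 0 T y' ∧
          ∀ t ∈ Set.Icc (0 : ℝ) T, IsYoungIntegral t T (fun s => g (y' s)) η (y' t - ξ)) →
        ∀ t ∈ Set.Icc (0 : ℝ) T, y' t = y t := by
  obtain ⟨y, hy, huniq⟩ := young_ode_wellposed_general (by linarith) hq2 hη hfη hg ξ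
  exact ⟨y, hy, fun y' hy' t ht => huniq y' hy'.2.2 ht⟩
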